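/- arXiv:1110.4136 — 2 statements merged into one kernel-verified Lean document; each statement's English description precedes it below -/
import Mathlib

section
/- If a binary word w containing at least one 1 is uneven, then for every k ≥ 1, alt(w^k) ≥ k − 1. -/
/-- k-fold concatenation of a word -/
def pw (u : List Bool) (k : ℕ) : List Bool := (List.replicate k u).flatten

/-- a block of `s` zeros -/
def zeros (s : ℕ) : List Bool := List.replicate s false

/-- `w` is an abelian square: `w = s ++ t` with `t` a permutation of `s`
(equivalently over a binary alphabet: equal length and equal number of 1's). -/
def IsAbelianSquare (w : List Bool) : Prop :=
  ∃ s t : List Bool, w = s ++ t ∧ s.length = t.length ∧ s.count true = t.count true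

def w4 : List Bool := [true, false, false, false]
def w3 : List Bool := [true, false, false]
def w2 : List Bool := [true, false]

/-- the word z = (1000)^n (100) (10)^(n!+n) (100) (100)^(2(n!+n)) -/
def Z (n : ℕ) : List Bool :=
  pw w4 n ++ w3 ++ pw w2 (n.factorial + n) ++ w3 ++ pw w3 (2 * (n.factorial + n))

/-- membership in the regular language R = (1000)^* (100) (10)^* (100) (100)^* -/
def InR (w : List Bool) : Prop :=
  ∃ a b c : ℕ, w = pw w4 a ++ w3 ++ pw w2 b ++ w3 ++ pw w3 c

/-- the gap sequence `[s_0, s_1, ..., s_k]` of `w = 0^{s_0} 1 0^{s_1} 1 ⋯ 1 0^{s_k}` -/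
def gaps (w : List Bool) : List ℕ := (w.splitOn true).map List.length

/-- `alt w` = number of indices `1 ≤ i < k` with `s_i ≠ s_{i+1}` -/
def alt (w : List Bool) : ℕ :=
  ((gaps w).tail.zip (gaps w).tail.tail).countP (fun p => decide (p.1 ≠ p.2))

/-- writing `w = 0^{s_1} 1 0^{s_2} 1 ⋯ 0^{s_k} 1 0^{s_{k+1}}` (with k ones),
the cyclic sequence `(s_1 + s_{k+1}, s_2, …, s_k)` -/
def cyclicGaps (w : List Bool) : List ℕ :=
  ((gaps w).headI + (gaps w).getLast!) :: (gaps w).tail.dropLast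

/-- `w` (containing a 1) is uneven: the cyclic gap sequence has length > 1 and
two cyclically adjacent unequal entries (equivalently it is not constant) -/
def Uneven (w : List Bool) : Prop :=
  2 ≤ w.count true ∧ ¬ (cyclicGaps w).Chain' (· = ·)

/-- `w` (containing a 1) is even if it is not uneven -/
def EvenWord (w : List Bool) : Prop := true ∈ w ∧ ¬ Uneven w

/-! Write `w = p 1 0^b`. Then `w^(k+1) = (p 1) (0^b p 1)^k 0^b`, and splitting at the last `1` of
every block shows that the gaps of `w^(k+1)` are those of `p`, followed by `k` copies of the gaps of
`0^b p`, followed by `b`. The gap sequence of `0^b p` is exactly the cyclic gap sequence of `w`, so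
if `w` is uneven, then each of the `k` copies contributes at least one unequal adjacent pair. -/

section Changes

variable {α : Type*} [DecidableEq α]

/-- The number of unequal adjacent pairs in a list, so that `alt w` is `changes (gaps w).tail`. -/
def changes (l : List α) : ℕ := (l.zip l.tail).countP fun p => decide (p.1 ≠ p.2)

theorem changes_cons_cons (a b : α) (l : List α) :
    changes (a :: b :: l) = changes (b :: l) + if a ≠ b then 1 else 0 := by
  simp [changes, List.countP_cons]

theorem changes_le_changes_cons (a : α) (l : List α) : changes l ≤ changes (a :: l) := by
  cases l with
  | nil => exact Nat.le_refl _
  | cons b l => exact changes_cons_cons a b l ▸ Nat.le_add_right _ _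

theorem changes_eq_zero_iff {l : List α} : changes l = 0 ↔ l.IsChain (· = ·) := by
  induction l with
  | nil => simp [changes]
  | cons a l ih =>
    cases l with
    | nil => simp [changes]
    | cons b l => simp [changes_cons_cons, ih, and_comm]

theorem changes_add_changes_le (l₁ l₂ : List α) :
    changes l₁ + changes l₂ ≤ changes (l₁ ++ l₂) := by
  induction l₁ with
  | nil => simp [changes]
  | cons a l₁ ih =>
    cases l₁ with
    | nil => simpa [changes] using changes_le_changes_cons a l₂
    | cons b l₁ =>
      simp only [List.cons_append, changes_cons_cons] at ih ⊢
      omega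

theorem changes_le_of_isInfix {l₁ l₂ : List α} (h : l₁ <:+: l₂) :
    changes l₁ ≤ changes l₂ := by
  obtain ⟨s, t, rfl⟩ := h
  have hs := changes_add_changes_le s l₁
  have ht := changes_add_changes_le (s ++ l₁) t
  omega

theorem mul_changes_le_changes_flatten_replicate (k : ℕ) (l : List α) :
    k * changes l ≤ changes (List.replicate k l).flatten := by
  induction k with
  | zero => simp
  | succ k ih =>
    calc (k + 1) * changes l = changes l + k * changes l := by ring
      _ ≤ changes l + changes (List.replicate k l).flatten := by gcongr
      _ ≤ changes (l ++ (List.replicate k l).flatten) := changes_add_changes_le _ _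
      _ = changes (List.replicate (k + 1) l).flatten := by
        rw [List.replicate_succ, List.flatten_cons]

end Changes

theorem pw_succ (u : List Bool) (k : ℕ) : pw u (k + 1) = u ++ pw u k := by
  simp [pw, List.replicate_succ]

theorem pw_append_succ (u v : List Bool) (k : ℕ) :
    pw (u ++ v) (k + 1) = u ++ pw (v ++ u) k ++ v := by
  induction k with
  | zero => simp [pw]
  | succ k ih => rw [pw_succ, ih, pw_succ (v ++ u)]; simp only [List.append_assoc]

theorem exists_eq_append_true_zeros {w : List Bool} (h : true ∈ w) :
    ∃ p b, w = p ++ true :: zeros b := by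
  induction w using List.reverseRecOn with
  | nil => simp at h
  | append_singleton w c ih =>
    cases c with
    | true => exact ⟨w, 0, rfl⟩
    | false =>
      obtain ⟨p, b, rfl⟩ := ih (by simpa using h)
      exact ⟨p, b + 1, by simp [zeros, List.replicate_succ']⟩

theorem gaps_ne_nil (w : List Bool) : gaps w ≠ [] := by
  simp [gaps, List.splitOn_ne_nil]

theorem gaps_append_true_cons (u v : List Bool) : gaps (u ++ true :: v) = gaps u ++ gaps v := by
  simp [gaps, List.splitOn_append_cons_self]

theorem gaps_false_cons (w : List Bool) : gaps (false :: w) = (gaps w).modifyHead (1 + ·) := by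
  simp only [gaps, List.splitOn_cons_eq_if_modifyHead]
  cases w.splitOn true <;> simp [Nat.add_comm]

theorem gaps_zeros_append (n : ℕ) (w : List Bool) :
    gaps (zeros n ++ w) = (gaps w).modifyHead (n + ·) := by
  induction n with
  | zero => cases h : gaps w <;> simp [zeros, h]
  | succ n ih =>
    calc gaps (zeros (n + 1) ++ w) = gaps (false :: (zeros n ++ w)) := rfl
      _ = (gaps w).modifyHead (n + 1 + ·) := by
        rw [gaps_false_cons, ih, List.modifyHead_modifyHead]
        congr 1
        funext m
        simp only [Function.comp_apply]
        omega

theorem gaps_zeros (n : ℕ) : gaps (zeros n) = [n] := by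
  simpa [gaps] using gaps_zeros_append n []

theorem gaps_pw_append_true_append (u v : List Bool) (k : ℕ) :
    gaps (pw (u ++ [true]) k ++ v) = (List.replicate k (gaps u)).flatten ++ gaps v := by
  induction k with
  | zero => simp [pw]
  | succ k ih =>
    rw [pw_succ, List.append_assoc, List.append_assoc, List.singleton_append,
      gaps_append_true_cons, ih, List.replicate_succ, List.flatten_cons, List.append_assoc]

theorem cyclicGaps_append_true_zeros (p : List Bool) (b : ℕ) :
    cyclicGaps (p ++ true :: zeros b) = gaps (zeros b ++ p) := by
  rw [cyclicGaps, gaps_append_true_cons, gaps_zeros, gaps_zeros_append]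
  obtain ⟨a, m, hp⟩ := List.exists_cons_of_ne_nil (gaps_ne_nil p)
  simp [hp, List.getLast!_eq_getLast?_getD, List.getLast?_cons, Nat.add_comm]

theorem gaps_pw_succ_append_true_zeros (p : List Bool) (b k : ℕ) :
    gaps (pw (p ++ true :: zeros b) (k + 1)) =
      gaps p ++ (List.replicate k (cyclicGaps (p ++ true :: zeros b))).flatten ++ [b] := by
  have hpw : pw (p ++ true :: zeros b) (k + 1) =
      p ++ true :: (pw (zeros b ++ p ++ [true]) k ++ zeros b) := by
    simpa using pw_append_succ (p ++ [true]) (zeros b) k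
  rw [hpw, gaps_append_true_cons, gaps_pw_append_true_append, gaps_zeros,
    cyclicGaps_append_true_zeros, List.append_assoc]

theorem flatten_replicate_cyclicGaps_isInfix {w : List Bool} (h : true ∈ w) (k : ℕ) :
    (List.replicate k (cyclicGaps w)).flatten <:+: (gaps (pw w (k + 1))).tail := by
  obtain ⟨p, b, rfl⟩ := exists_eq_append_true_zeros h
  refine ⟨(gaps p).tail, [b], ?_⟩
  rw [gaps_pw_succ_append_true_zeros, List.append_assoc, List.append_assoc,
    List.tail_append_of_ne_nil (gaps_ne_nil p)]

theorem mul_changes_cyclicGaps_le_alt_pw_succ {w : List Bool} (h : true ∈ w) (k : ℕ) :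
    k * changes (cyclicGaps w) ≤ alt (pw w (k + 1)) :=
  (mul_changes_le_changes_flatten_replicate k _).trans
    (changes_le_of_isInfix (flatten_replicate_cyclicGaps_isInfix h k))

theorem Uneven.changes_cyclicGaps_pos {w : List Bool} (hu : Uneven w) :
    0 < changes (cyclicGaps w) :=
  Nat.pos_of_ne_zero fun h => hu.2 (changes_eq_zero_iff.mp h)

theorem stmt4 (w : List Bool) (h1 : true ∈ w) (hu : Uneven w)
    (k : ℕ) (hk : 1 ≤ k) : k - 1 ≤ alt (pw w k) := by
  obtain ⟨k, rfl⟩ := Nat.exists_eq_add_of_le' hk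
  calc k + 1 - 1 = k := Nat.add_sub_cancel k 1
    _ ≤ k * changes (cyclicGaps w) := Nat.le_mul_of_pos_right k hu.changes_cyclicGaps_pos
    _ ≤ alt (pw w (k + 1)) := mul_changes_cyclicGaps_le_alt_pw_succ h1 k
end

section
/- The language L of binary words that are not abelian squares is not context-free. -/
/-!
Instead of intersecting with a regular language, we color the positions of a word with finitely many
colors and strengthen Ogden's lemma: each of the two pumped factors `v` and `x` can be taken to
start and end at positions of the same color. Coloring a position by the state an automaton has
reached there makes both factors loops of the automaton. The proof follows a path in the parse tree
along which the number of marked letters keeps dropping, but at each step by a bounded factor only,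
and finds two nodes on it with the same nonterminal and the same colors at both ends.

Apply this to `0^n 1^b (10)^b` with `b = n + 2 n!`, its first `n` letters marked and each position
colored by its block and its parity. Then `v` lies in the first block. If `x` also lies in the first
block, then `|v| + |x|` divides `n!`, and otherwise `v` contains a marked letter and `|v|` divides
`n!`. In either case pumping brings the first block to length exactly `b`, while an `x` outside it
adds an even number of ones or an even number of copies of `10`. The resulting words `0^b 1^(b + 2e)
(10)^b` and `0^b 1^b (10)^(b + 2e)` are abelian squares.
-/

open ContextFreeGrammar List

section Ogden

variable {T : Type*} {g : ContextFreeGrammar T}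

/-- `Yields g s w` says that the sentential form `s` derives the terminal word `w`; a proof is a
parse forest, with one tree for each symbol of `s`. Unlike `ContextFreeGrammar.Derives`, it allows
induction on subtrees. -/
inductive Yields (g : ContextFreeGrammar T) : List (Symbol T g.NT) → List T → Prop
  | nil : Yields g [] []
  | terminal (a : T) {s : List (Symbol T g.NT)} {w : List T} :
      Yields g s w → Yields g (.terminal a :: s) (a :: w)
  | nonterminal {r : ContextFreeRule T g.NT} {s : List (Symbol T g.NT)} {v w : List T} :
      r ∈ g.rules → Yields g r.output v → Yields g s w →
      Yields g (.nonterminal r.input :: s) (v ++ w)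

namespace Yields

theorem map_terminal (w : List T) : Yields g (w.map .terminal) w := by
  induction w with
  | nil => exact .nil
  | cons a w ih => exact .terminal a ih

theorem of_rule {r : ContextFreeRule T g.NT} (hr : r ∈ g.rules) {w : List T}
    (h : Yields g r.output w) : Yields g [.nonterminal r.input] w := by
  simpa only [append_nil] using Yields.nonterminal hr h .nil

theorem append {s t : List (Symbol T g.NT)} {v w : List T} (hs : Yields g s v)
    (ht : Yields g t w) : Yields g (s ++ t) (v ++ w) := by
  induction hs with
  | nil => exact ht
  | terminal a _ ih => exact .terminal a ih
  | nonterminal hr ho _ _ ih =>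
    rw [append_assoc]
    exact .nonterminal hr ho ih

theorem exists_of_append {s t : List (Symbol T g.NT)} {w : List T} (h : Yields g (s ++ t) w) :
    ∃ w₁ w₂, w = w₁ ++ w₂ ∧ Yields g s w₁ ∧ Yields g t w₂ := by
  induction s generalizing w with
  | nil => exact ⟨[], w, rfl, .nil, h⟩
  | cons X s ih =>
    cases h with
    | terminal a h =>
      obtain ⟨w₁, w₂, rfl, h₁, h₂⟩ := ih h
      exact ⟨a :: w₁, w₂, rfl, .terminal a h₁, h₂⟩
    | nonterminal hr ho h =>
      obtain ⟨w₁, w₂, rfl, h₁, h₂⟩ := ih h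
      exact ⟨_ ++ w₁, w₂, (append_assoc ..).symm, .nonterminal hr ho h₁, h₂⟩

theorem of_derives {s : List (Symbol T g.NT)} {w : List T}
    (h : g.Derives s (w.map .terminal)) : Yields g s w := by
  induction h using Relation.ReflTransGen.head_induction_on with
  | refl => exact map_terminal w
  | head h _ ih =>
    obtain ⟨r, hr, hrw⟩ := h
    obtain ⟨p, q, rfl, rfl⟩ := hrw.exists_parts
    obtain ⟨_, w₃, rfl, h₁₂, h₃⟩ := exists_of_append ih
    obtain ⟨w₁, w₂, rfl, h₁, h₂⟩ := exists_of_append h₁₂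
    exact (h₁.append (of_rule hr h₂)).append h₃

theorem derives {s : List (Symbol T g.NT)} {w : List T} (h : Yields g s w) :
    g.Derives s (w.map .terminal) := by
  induction h with
  | nil => exact .refl _
  | terminal a _ ih => exact ih.append_left [.terminal a]
  | @nonterminal r s v w hr _ _ ihv ihw =>
    have hrule : g.Produces (.nonterminal r.input :: s) (r.output ++ s) := ⟨r, hr, .head s⟩
    rw [map_append]
    exact hrule.trans_derives ((ihv.append_right s).trans (ihw.append_left _))

theorem exists_rule {A : g.NT} {w : List T} (h : Yields g [.nonterminal A] w) :
    ∃ r ∈ g.rules, r.input = A := by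
  cases h with
  | nonterminal hr _ _ => exact ⟨_, hr, rfl⟩

end Yields

/-- A node of a parse tree, placed in an ambient word: its nonterminal, the position in the ambient
word where its yield starts, and its yield. -/
structure ParseNode (g : ContextFreeGrammar T) where
  nt : g.NT
  start : ℕ
  word : List T
  yields : Yields g [.nonterminal nt] word

/-- `x.OccursIn s p w` says that the node `x` lies in some parse forest of the word `w` from the
sentential form `s`, where `w` starts at position `p` of the ambient word. -/
def ParseNode.OccursIn (x : ParseNode g) (s : List (Symbol T g.NT)) (p : ℕ) (w : List T) : Prop :=
  ∃ u y, w = u ++ x.word ++ y ∧ x.start = p + u.length ∧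
    g.Derives s (u.map .terminal ++ [.nonterminal x.nt] ++ y.map .terminal)

namespace ParseNode.OccursIn

variable {x y : ParseNode g} {s t : List (Symbol T g.NT)} {p : ℕ} {v w : List T}

theorem append_left (hv : Yields g s v) (hx : x.OccursIn t (p + v.length) w) :
    x.OccursIn (s ++ t) p (v ++ w) := by
  obtain ⟨u, y, rfl, hstart, hder⟩ := hx
  refine ⟨v ++ u, y, by simp only [append_assoc], by rw [hstart, length_append, add_assoc], ?_⟩
  simpa only [map_append, append_assoc] using
    (hv.derives.append_right t).trans (hder.append_left _)

theorem append_right (hx : x.OccursIn s p v) (hw : Yields g t w) :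
    x.OccursIn (s ++ t) p (v ++ w) := by
  obtain ⟨u, y, rfl, hstart, hder⟩ := hx
  refine ⟨u, y ++ w, by simp only [append_assoc], hstart, ?_⟩
  simpa only [map_append, append_assoc] using
    (hder.append_right t).trans (hw.derives.append_left _)

theorem of_rule {r : ContextFreeRule T g.NT} (hr : r ∈ g.rules) (hx : x.OccursIn r.output p w) :
    x.OccursIn [.nonterminal r.input] p w := by
  obtain ⟨u, y, hw, hstart, hder⟩ := hx
  exact ⟨u, y, hw, hstart, Produces.trans_derives ⟨r, hr, .input_output⟩ hder⟩

theorem self (x : ParseNode g) : x.OccursIn [.nonterminal x.nt] x.start x.word :=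
  ⟨[], [], (append_nil _).symm, rfl, .refl _⟩

theorem trans (hy : y.OccursIn [.nonterminal x.nt] x.start x.word) (hx : x.OccursIn s p w) :
    y.OccursIn s p w := by
  obtain ⟨u, z, hw, hstart, hder⟩ := hx
  obtain ⟨u', z', hw', hstart', hder'⟩ := hy
  refine ⟨u ++ u', z' ++ z, by simp only [hw, hw', append_assoc],
    by rw [hstart', hstart, length_append, add_assoc], ?_⟩
  simpa only [map_append, append_assoc] using
    hder.trans ((hder'.append_left _).append_right _)

end ParseNode.OccursIn

theorem derives_pump {A : g.NT} {v x : List T}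
    (h : g.Derives [.nonterminal A] (v.map .terminal ++ [.nonterminal A] ++ x.map .terminal))
    (i : ℕ) :
    g.Derives [.nonterminal A] ((replicate i v).flatten.map .terminal ++ [.nonterminal A] ++
      (replicate i x).flatten.map .terminal) := by
  induction i with
  | zero => exact .refl _
  | succ i ih =>
    rw [replicate_succ' (a := v), replicate_succ (a := x)]
    simpa only [flatten_append, flatten_cons, flatten_nil, append_nil, map_append, append_assoc]
      using ih.trans ((h.append_left _).append_right _)

theorem ParseNode.exists_pump {x y : ParseNode g} {s : List (Symbol T g.NT)} {w : List T}
    (hx : x.OccursIn s 0 w) (hy : y.OccursIn [.nonterminal x.nt] x.start x.word)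
    (hnt : x.nt = y.nt) :
    ∃ u v v' z, w = u ++ v ++ y.word ++ v' ++ z ∧ x.word = v ++ y.word ++ v' ∧
      x.start = u.length ∧ y.start = (u ++ v).length ∧
      ∀ i, g.Derives s ((u ++ (replicate i v).flatten ++ y.word ++ (replicate i v').flatten ++
        z).map .terminal) := by
  obtain ⟨u, z, rfl, hstart, hder⟩ := hx
  obtain ⟨v, v', hword, hstart', hder'⟩ := hy
  rw [zero_add] at hstart
  refine ⟨u, v, v', z, by simp only [hword, append_assoc], hword, hstart,
    by rw [hstart', hstart, length_append], fun i => ?_⟩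
  have hyield := y.yields.derives
  rw [← hnt] at hyield hder'
  have hcore := (derives_pump hder' i).trans ((hyield.append_left _).append_right _)
  simpa only [map_append, append_assoc] using
    hder.trans ((hcore.append_left _).append_right _)

section Marks

variable (P : ℕ → Prop) [DecidablePred P]

/-- The number of marked positions (those satisfying `P`) in the window of length `len` that starts
at position `start`. -/
def markCount (start len : ℕ) : ℕ := Nat.count (fun i => P (start + i)) len

theorem markCount_add (p a b : ℕ) :
    markCount P p (a + b) = markCount P p a + markCount P (p + a) b := by
  simp only [markCount, Nat.count_add, add_assoc]

variable {P}

theorem exists_of_markCount_pos {p len : ℕ} (h : 0 < markCount P p len) :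
    ∃ i, p ≤ i ∧ i < p + len ∧ P i := by
  obtain ⟨i, hi, hPi⟩ := Nat.count_ne_iff_exists.mp h.ne'
  exact ⟨p + i, p.le_add_right i, Nat.add_lt_add_left hi p, hPi⟩

theorem exists_of_markCount_lt {p a b c : ℕ}
    (h : markCount P (p + a) b < markCount P p (a + b + c)) :
    ∃ i, P i ∧ (p ≤ i ∧ i < p + a ∨ p + a + b ≤ i ∧ i < p + a + b + c) := by
  rw [markCount_add, markCount_add, ← add_assoc] at h
  rcases Nat.eq_zero_or_pos (markCount P p a) with ha | ha
  · obtain ⟨i, hle, hlt, hi⟩ := exists_of_markCount_pos (P := P) (p := p + a + b) (len := c)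
      (by omega)
    exact ⟨i, hi, .inr ⟨hle, hlt⟩⟩
  · obtain ⟨i, hle, hlt, hi⟩ := exists_of_markCount_pos ha
    exact ⟨i, hi, .inl ⟨hle, hlt⟩⟩

theorem Yields.exists_node_markCount {d k : ℕ} (hk : 1 ≤ k)
    (hd : ∀ r ∈ g.rules, r.output.length ≤ d) {s : List (Symbol T g.NT)} {w : List T}
    (h : Yields g s w) (p : ℕ) (hp : s.length * k < markCount P p w.length) :
    ∃ x : ParseNode g, x.OccursIn s p w ∧ k < markCount P x.start x.word.length ∧
      markCount P x.start x.word.length ≤ d * k := by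
  induction h generalizing p with
  | nil => simp [markCount] at hp
  | @terminal a s w _ ih =>
    have hw : s.length * k < markCount P (p + 1) w.length := by
      have hone : markCount P p 1 ≤ 1 := Nat.count_le _
      rw [length_cons, add_mul, one_mul, length_cons, add_comm w.length, markCount_add] at hp
      omega
    obtain ⟨x, hx, hlt, hle⟩ := ih (p + 1) hw
    exact ⟨x, hx.append_left (map_terminal [a]), hlt, hle⟩
  | @nonterminal r s v w hr hv hw ihv ihw =>
    rw [length_cons, add_mul, one_mul, length_append, markCount_add] at hp
    rcases le_or_gt (markCount P p v.length) k with hlight | hheavy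
    · obtain ⟨x, hx, hlt, hle⟩ := ihw (p + v.length) (by omega)
      exact ⟨x, hx.append_left (of_rule hr hv), hlt, hle⟩
    · rcases le_or_gt (markCount P p v.length) (d * k) with hle | hlt
      · let x : ParseNode g := ⟨r.input, p, v, of_rule hr hv⟩
        exact ⟨x, (ParseNode.OccursIn.self x).append_right hw, hheavy, hle⟩
      · obtain ⟨x, hx, hlt, hle⟩ := ihv p ((Nat.mul_le_mul_right k (hd r hr)).trans_lt hlt)
        exact ⟨x, (hx.of_rule hr).append_right hw, hlt, hle⟩

variable (g P) in
/-- `(x, y)` is related when `y` is a descendant of `x` whose yield has strictly fewer marks.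
The two nodes between which a tree is pumped are picked from a long chain for this relation. -/
def MarkedDescent : SetRel (ParseNode g) (ParseNode g) :=
  {(x, y) | y.OccursIn [.nonterminal x.nt] x.start x.word ∧
    markCount P y.start y.word.length < markCount P x.start x.word.length}

instance : (MarkedDescent g P).IsTrans where
  trans _ _ _ hxy hyz := ⟨hyz.1.trans hxy.1, hyz.2.trans hxy.2⟩

theorem exists_relSeries_markedDescent {d : ℕ} (hd₁ : 1 ≤ d)
    (hd : ∀ r ∈ g.rules, r.output.length ≤ d) (h : ℕ) (x : ParseNode g)
    (hx : d ^ h < markCount P x.start x.word.length) :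
    ∃ c : RelSeries (MarkedDescent g P), c.head = x ∧ c.length = h := by
  induction h generalizing x with
  | zero => exact ⟨.singleton _ x, rfl, rfl⟩
  | succ h ih =>
    have hpow : d ^ h ≤ d ^ (h + 1) := Nat.pow_le_pow_right hd₁ h.le_succ
    obtain ⟨y, hy, hlt, hle⟩ := x.yields.exists_node_markCount (Nat.one_le_pow h d hd₁) hd x.start
      (by simpa only [length_singleton, one_mul] using hpow.trans_lt hx)
    rw [← pow_succ'] at hle
    obtain ⟨c, rfl, rfl⟩ := ih y hlt
    have hdesc : (x, c.head) ∈ MarkedDescent g P := ⟨hy, hle.trans_lt hx⟩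
    exact ⟨c.cons x hdesc, rfl, by simp⟩

end Marks

theorem exists_forall_output_length_le (g : ContextFreeGrammar T) :
    ∃ d, 1 ≤ d ∧ ∀ r ∈ g.rules, r.output.length ≤ d :=
  ⟨g.rules.sup (fun r => r.output.length) + 1, Nat.le_add_left _ _, fun _ hr =>
    (Finset.le_sup (f := fun r : ContextFreeRule T g.NT => r.output.length) hr).trans
      (Nat.le_succ _)⟩

open Classical in
theorem exists_markedDescent_eq_label (g : ContextFreeGrammar T) (C : Type*) [Finite C] :
    ∃ n, ∀ (P : ℕ → Prop) [DecidablePred P] (col : ℕ → C) (root : ParseNode g),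
      n ≤ markCount P root.start root.word.length →
      ∃ x y : ParseNode g, x.OccursIn [.nonterminal root.nt] root.start root.word ∧
        (x, y) ∈ MarkedDescent g P ∧ x.nt = y.nt ∧ col x.start = col y.start ∧
        col (x.start + x.word.length) = col (y.start + y.word.length) := by
  have := Fintype.ofFinite C
  obtain ⟨d, hd₁, hd⟩ := exists_forall_output_length_le g
  let labels : Finset (g.NT × C × C) := g.rules.image (·.input) ×ˢ Finset.univ
  refine ⟨d ^ labels.card + 1, fun P _ col root hroot => ?_⟩
  obtain ⟨c, rfl, hlen⟩ := exists_relSeries_markedDescent hd₁ hd labels.card root hroot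
  let label (i : Fin (c.length + 1)) : g.NT × C × C :=
    ((c i).nt, col (c i).start, col ((c i).start + (c i).word.length))
  have hmaps : ∀ i ∈ Finset.univ, label i ∈ labels := fun i _ =>
    Finset.mem_product.mpr
      ⟨Finset.mem_image.mpr (c i).yields.exists_rule, Finset.mem_univ _⟩
  obtain ⟨i, -, j, -, hij, hlabel⟩ := Finset.exists_ne_map_eq_of_card_lt_of_maps_to
    (by rw [Finset.card_univ, Fintype.card_fin, hlen]; exact Nat.lt_succ_self _) hmaps
  wlog hlt : i < j generalizing i j
  · exact this j i hij.symm hlabel.symm (lt_of_le_of_ne (not_lt.mp hlt) hij.symm)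
  obtain ⟨hnt, hleft, hright⟩ : _ ∧ _ ∧ _ := by simpa only [label, Prod.mk.injEq] using hlabel
  refine ⟨c i, c j, ?_, c.rel_of_lt hlt, hnt, hleft, hright⟩
  rcases c.rel_or_eq_of_le (Fin.zero_le i) with hi | hi
  · exact hi.1
  · rw [← hi]
    exact ParseNode.OccursIn.self _

theorem ogden_lemma_coloring {L : Language T} (hL : L.IsContextFree) (C : Type*) [Finite C] :
    ∃ n, ∀ (P : ℕ → Prop) [DecidablePred P] (col : ℕ → C), ∀ w ∈ L, n ≤ Nat.count P w.length →
      ∃ u v m x y, w = u ++ v ++ m ++ x ++ y ∧ col u.length = col (u ++ v).length ∧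
        col (u ++ v ++ m).length = col (u ++ v ++ m ++ x).length ∧
        (∃ p, P p ∧ (u.length ≤ p ∧ p < (u ++ v).length ∨
          (u ++ v ++ m).length ≤ p ∧ p < (u ++ v ++ m ++ x).length)) ∧
        ∀ i, u ++ (replicate i v).flatten ++ m ++ (replicate i x).flatten ++ y ∈ L := by
  obtain ⟨g, rfl⟩ := hL
  obtain ⟨n, hn⟩ := exists_markedDescent_eq_label g C
  refine ⟨n, fun P _ col w hw hmarks => ?_⟩
  let root : ParseNode g := ⟨g.initial, 0, w, .of_derives hw⟩
  obtain ⟨a, b, ha, ⟨hb, hlt⟩, hnt, hleft, hright⟩ :=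
    hn P col root (by simpa only [markCount, zero_add, root] using hmarks)
  obtain ⟨u, v, x, y, hw', hword, hstart, hstart', hpump⟩ := ParseNode.exists_pump ha hb hnt
  have hend : a.start + a.word.length = (u ++ v ++ b.word ++ x).length := by
    simp only [hstart, hword, length_append, add_assoc]
  have hend' : b.start + b.word.length = (u ++ v ++ b.word).length := by
    rw [hstart', length_append (bs := b.word)]
  rw [hend, hend'] at hright
  rw [hstart, hstart'] at hleft
  refine ⟨u, v, b.word, x, y, hw', hleft, hright.symm, ?_, hpump⟩
  rw [hstart', hstart, hword] at hlt
  simp only [length_append] at hlt ⊢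
  exact exists_of_markCount_lt hlt

end Ogden


section WordPowers

variable {α : Type*} {p u v y : List α} {c k : ℕ}

theorem flatten_replicate_add (p : List α) (m n : ℕ) :
    (replicate (m + n) p).flatten = (replicate m p).flatten ++ (replicate n p).flatten := by
  rw [replicate_add, flatten_append]

theorem length_flatten_replicate (p : List α) (k : ℕ) :
    (replicate k p).flatten.length = k * p.length := by
  simp only [length_flatten, map_replicate, sum_replicate, smul_eq_mul]

theorem append_double_append_of_eq_power (h : u ++ v ++ y = (replicate c p).flatten)
    (hv : v.length = k * p.length) : u ++ v ++ v ++ y = (replicate (c + k) p).flatten := by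
  have hcomm : (replicate k p).flatten ++ u ++ (v ++ y) =
      u ++ v ++ (y ++ (replicate k p).flatten) := by
    rw [append_assoc, ← append_assoc u v y, h, ← flatten_replicate_add, add_comm k,
      flatten_replicate_add, ← h, append_assoc _ y]
  have hshift : (replicate k p).flatten ++ u = u ++ v :=
    append_inj_left hcomm (by
      rw [length_append, length_append, length_flatten_replicate, hv, add_comm])
  calc u ++ v ++ v ++ y
      = (replicate k p).flatten ++ u ++ v ++ y := by rw [hshift]
    _ = (replicate k p).flatten ++ (u ++ v ++ y) := by simp only [append_assoc]
    _ = (replicate (c + k) p).flatten := by rw [h, ← flatten_replicate_add, add_comm]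

theorem append_power_append_of_eq_power (h : u ++ v ++ y = (replicate c p).flatten)
    (hv : v.length = k * p.length) (i : ℕ) :
    u ++ (replicate (i + 1) v).flatten ++ y = (replicate (c + k * i) p).flatten := by
  induction i with
  | zero => simpa using h
  | succ i ih =>
    have hsucc (j : ℕ) : (replicate (j + 1) v).flatten = (replicate j v).flatten ++ v := by
      rw [replicate_succ', flatten_concat]
    rw [hsucc i, ← append_assoc] at ih
    rw [hsucc (i + 1), hsucc i, mul_add_one, ← add_assoc]
    simpa only [append_assoc] using append_double_append_of_eq_power ih hv

theorem append_power_append_of_window {a b : List α}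
    (h : u ++ v ++ y = a ++ (replicate c p).flatten ++ b) (hv : v.length = k * p.length)
    (hu : a.length ≤ u.length) (huv : (u ++ v).length ≤ (a ++ (replicate c p).flatten).length)
    (i : ℕ) :
    u ++ (replicate (i + 1) v).flatten ++ y = a ++ (replicate (c + k * i) p).flatten ++ b := by
  obtain ⟨y', hy'⟩ := prefix_of_prefix_length_le (prefix_append _ y)
    (h ▸ prefix_append _ b) huv
  obtain ⟨u', rfl⟩ := prefix_of_prefix_length_le (prefix_append a _)
    (by rw [← hy', append_assoc]; exact prefix_append u _) hu
  have hy : y = y' ++ b := by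
    rw [← hy'] at h
    simpa only [append_assoc, append_cancel_left_eq] using h
  have hblock : u' ++ v ++ y' = (replicate c p).flatten := by
    simpa only [append_assoc, append_cancel_left_eq] using hy'
  rw [← append_power_append_of_eq_power hblock hv i, hy]
  simp only [append_assoc]

end WordPowers

theorem IsAbelianSquare.two_mul_count_true_le {p w : List Bool} (hw : IsAbelianSquare w)
    (hp : p <+: w) (hlen : 2 * p.length ≤ w.length) :
    2 * p.count true ≤ w.count true := by
  obtain ⟨s, t, rfl, hlength, hcount⟩ := hw
  rw [length_append] at hlen
  have hps : p <+: s := prefix_of_prefix_length_le hp (prefix_append s t) (by omega)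
  have := hps.sublist.count_le true
  rw [count_append]
  omega

theorem length_pw (u : List Bool) (k : ℕ) : (pw u k).length = k * u.length :=
  length_flatten_replicate u k

theorem count_pw (a : Bool) (u : List Bool) (k : ℕ) : (pw u k).count a = k * u.count a := by
  simp only [pw, count_flatten, map_replicate, sum_replicate, smul_eq_mul]

theorem pw_add (u : List Bool) (m n : ℕ) : pw u (m + n) = pw u m ++ pw u n :=
  flatten_replicate_add u m n

/-- The words `0^a 1^b (10)^c` to which the pumping argument is applied. In `(10)^c` half of the
letters are ones, so `c` can change without upsetting the balance between the two halves of an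
abelian square. -/
def testWord (a b c : ℕ) : List Bool := pw [false] a ++ pw [true] b ++ pw w2 c

namespace testWord

theorem length_eq (a b c : ℕ) : (testWord a b c).length = a + b + 2 * c := by
  simp [testWord, length_pw, w2, mul_comm, add_assoc]

theorem count_true_eq (a b c : ℕ) : (testWord a b c).count true = b + c := by
  simp [testWord, count_pw, w2]

theorem isAbelianSquare_left (a e : ℕ) : IsAbelianSquare (testWord a (a + 2 * e) a) := by
  refine ⟨pw [false] a ++ pw [true] (a + e), pw [true] e ++ pw w2 a, ?_, ?_, ?_⟩
  · rw [testWord, show a + 2 * e = a + e + e by ring, pw_add [true] (a + e)]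
    simp only [append_assoc]
  · simp only [length_append, length_pw, w2, length_cons, length_nil]
    ring
  · simp [count_pw, w2]
    ring

theorem isAbelianSquare_right (a e : ℕ) : IsAbelianSquare (testWord a a (a + 2 * e)) := by
  refine ⟨testWord a a e, pw w2 (a + e), ?_, ?_, ?_⟩
  · rw [testWord, testWord, show a + 2 * e = e + (a + e) by ring, pw_add w2 e]
    simp only [append_assoc]
  · rw [length_eq, length_pw, w2, length_cons, length_singleton]
    ring
  · simp [count_true_eq, count_pw, w2]

theorem not_isAbelianSquare {a b : ℕ} (hab : a + 2 ≤ b) : ¬ IsAbelianSquare (testWord a b b) := by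
  intro h
  have hpre : testWord a b 0 ++ [true] <+: testWord a b b := by
    obtain ⟨c, rfl⟩ : ∃ c, b = 1 + c := ⟨b - 1, by omega⟩
    refine ⟨false :: pw w2 c, ?_⟩
    rw [testWord, testWord, pw_add w2 1]
    simp [pw, w2]
  have := h.two_mul_count_true_le hpre (by
    rw [length_append, length_eq, length_eq, length_singleton]; omega)
  rw [count_append, count_true_eq, count_true_eq, count_singleton_self] at this
  omega

variable {a b c k : ℕ} {u v y : List Bool}

theorem pump_fst (h : u ++ v ++ y = testWord a b c) (huv : (u ++ v).length ≤ a) (i : ℕ) :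
    u ++ pw v (i + 1) ++ y = testWord (a + v.length * i) b c := by
  simpa [testWord, pw] using append_power_append_of_window (a := []) (p := [false]) (c := a)
    (b := pw [true] b ++ pw w2 c) (k := v.length) (by simpa [testWord, pw] using h) (by simp)
    (Nat.zero_le _) (by simpa using huv) i

theorem pump_fst_of_append {m x : List Bool} (h : u ++ v ++ m ++ x ++ y = testWord a b c)
    (huv : (u ++ v).length ≤ a) (i : ℕ) :
    u ++ pw v (i + 1) ++ m ++ x ++ y = testWord (a + v.length * i) b c := by
  have hassoc : u ++ v ++ (m ++ x ++ y) = testWord a b c := by rw [← h]; simp only [append_assoc]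
  rw [← pump_fst hassoc huv]
  simp only [append_assoc]

theorem pump_snd (h : u ++ v ++ y = testWord a b c) (hu : a ≤ u.length)
    (huv : (u ++ v).length ≤ a + b) (i : ℕ) :
    u ++ pw v (i + 1) ++ y = testWord a (b + v.length * i) c :=
  append_power_append_of_window h (by simp) (by simpa [pw] using hu) (by simpa [pw] using huv) i

theorem pump_thd (h : u ++ v ++ y = testWord a b c) (hu : a + b ≤ u.length)
    (hv : v.length = 2 * k) (i : ℕ) :
    u ++ pw v (i + 1) ++ y = testWord a b (c + k * i) := by
  have hwindow : u ++ v ++ y = testWord a b c ++ [] := by rw [h, append_nil]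
  have huv : (u ++ v).length ≤ (testWord a b c).length := h ▸ (prefix_append _ y).length_le
  exact (append_power_append_of_window hwindow (by rw [hv, mul_comm]; rfl)
    (by simpa [length_pw] using hu) huv i).trans (append_nil _)

theorem le_count_lt_length (a b c : ℕ) : a ≤ Nat.count (· < a) (testWord a b c).length := by
  rw [length_eq, add_assoc, Nat.count_add, Nat.count_of_forall fun _ => id]
  exact Nat.le_add_right _ _

variable {d n : ℕ} {m x : List Bool}

theorem exists_pump_isAbelianSquare_fst_fst
    (h : u ++ v ++ m ++ x ++ y = testWord n (n + 2 * d) (n + 2 * d))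
    (hvx : v.length + x.length ∣ d) (hx : u.length + v.length + m.length + x.length ≤ n) :
    ∃ i, IsAbelianSquare (u ++ pw v i ++ m ++ pw x i ++ y) := by
  obtain ⟨j, rfl⟩ := hvx
  have huv : u.length + v.length ≤ n := by omega
  simp only [← length_append] at hx huv
  have hpump := pump_fst_of_append (pump_fst h hx (2 * j)) (huv.trans (Nat.le_add_right ..)) (2 * j)
  refine ⟨2 * j + 1, ?_⟩
  convert isAbelianSquare_left (n + 2 * ((v.length + x.length) * j)) 0 using 1
  rw [hpump]
  congr 1; ring

theorem exists_pump_isAbelianSquare_fst_snd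
    (h : u ++ v ++ m ++ x ++ y = testWord n (n + 2 * d) (n + 2 * d))
    (hv : v.length ∣ d) (huv : u.length + v.length ≤ n) (hm : n ≤ u.length + v.length + m.length)
    (hx : u.length + v.length + m.length + x.length ≤ n + (n + 2 * d)) :
    ∃ i, IsAbelianSquare (u ++ pw v i ++ m ++ pw x i ++ y) := by
  obtain ⟨j, rfl⟩ := hv
  simp only [← length_append] at huv hm hx
  have hpump := pump_fst_of_append (pump_snd h hm hx (2 * j)) huv (2 * j)
  refine ⟨2 * j + 1, ?_⟩
  convert isAbelianSquare_left (n + 2 * (v.length * j)) (x.length * j) using 1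
  rw [hpump]
  congr 1 <;> ring

theorem exists_pump_isAbelianSquare_fst_thd
    (h : u ++ v ++ m ++ x ++ y = testWord n (n + 2 * d) (n + 2 * d))
    (hv : v.length ∣ d) (huv : u.length + v.length ≤ n)
    (hm : n + (n + 2 * d) ≤ u.length + v.length + m.length) (hx : Even x.length) :
    ∃ i, IsAbelianSquare (u ++ pw v i ++ m ++ pw x i ++ y) := by
  obtain ⟨j, rfl⟩ := hv
  obtain ⟨k, hk⟩ := even_iff_exists_two_mul.mp hx
  simp only [← length_append] at huv hm
  have hpump := pump_fst_of_append (pump_thd h hm hk (2 * j)) huv (2 * j)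
  refine ⟨2 * j + 1, ?_⟩
  convert isAbelianSquare_right (n + 2 * (v.length * j)) (k * j) using 1
  rw [hpump]
  congr 1 <;> ring

end testWord

theorem stmt10 : ¬ Language.IsContextFree {w : List Bool | ¬ IsAbelianSquare w} := by
  intro hL
  obtain ⟨n, hn⟩ := ogden_lemma_coloring hL (Prop × Prop × Prop)
  let b := n + 2 * n.factorial
  have hnb : n + 2 ≤ b := Nat.add_le_add_left (Nat.mul_le_mul_left 2 n.factorial_pos) n
  obtain ⟨u, v, m, x, y, hw, hcolv, hcolx, ⟨p, hp, hpos⟩, hpump⟩ :=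
    hn (· < n) (fun p => (p ≤ n, p ≤ n + b, Even p)) (testWord n b b)
      (testWord.not_isAbelianSquare hnb) (testWord.le_count_lt_length n b b)
  suffices ∃ i, IsAbelianSquare (u ++ pw v i ++ m ++ pw x i ++ y) from
    let ⟨i, hi⟩ := this; hpump i hi
  simp only [Prod.mk.injEq, eq_iff_iff, length_append] at hcolv hcolx hpos
  obtain ⟨hxn, hxb, hxeven⟩ := hcolx
  have huv : u.length + v.length ≤ n := by omega
  by_cases hfst : u.length + v.length + m.length + x.length ≤ n
  · exact testWord.exists_pump_isAbelianSquare_fst_fst hw.symm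
      (Nat.dvd_factorial (by omega) (by omega)) hfst
  have hv : v.length ∣ n.factorial := Nat.dvd_factorial (by omega) (by omega)
  by_cases hsnd : u.length + v.length + m.length + x.length ≤ n + b
  · exact testWord.exists_pump_isAbelianSquare_fst_snd hw.symm hv huv (by omega) hsnd
  · have hx : Even x.length := by rw [Nat.even_add (n := x.length)] at hxeven; tauto
    exact testWord.exists_pump_isAbelianSquare_fst_thd hw.symm hv huv (by omega) hx
end
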